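/- Let a be a real number with 1 < a < 3, and define G_{a;1}(x) := x^(a−1) e^(−x) + (a−1) · G_{a−1}(x) for real x > 0, where G_{a−1}(x) = ((x+b_{a−1})^{a−1} − x^{a−1}) e^(−x)/((a−1) b_{a−1}). Then for every real x > 0: Γ(a,x) < G_{a;1}(x) if 1 < a < 2; Γ(a,x) = G_{a;1}(x) if a = 2; and Γ(a,x) > G_{a;1}(x) if 2 < a < 3. Moreover, G_{a;1}(x)/Γ(a,x) → 1 both as x → 0+ and as x → ∞. -/

import Mathlib

open Real Filter Set

/-- Upper incomplete gamma function `Γ(a,x) = ∫_x^∞ t^(a-1) e^(-t) dt`. -/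
noncomputable def incGamma (a x : ℝ) : ℝ := ∫ t in Set.Ioi x, t ^ (a - 1) * Real.exp (-t)

/-- `b_a = Γ(a+1)^(1/(a-1))` for `a ≠ 1`, and `b_1 = e^(1-γ)`. -/
noncomputable def bCoef (a : ℝ) : ℝ :=
  if a = 1 then Real.exp (1 - Real.eulerMascheroniConstant)
  else Real.Gamma (a + 1) ^ (1 / (a - 1))

/-- `G_a(x) = ((x+b_a)^a - x^a) e^(-x) / (a b_a)`. -/
noncomputable def Gbound (a x : ℝ) : ℝ :=
  ((x + bCoef a) ^ a - x ^ a) * Real.exp (-x) / (a * bCoef a)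

/-- `g_a(x) = (((x+2)^a - x^a - 2^a)/(2a) + Γ(a)) e^(-x)`. -/
noncomputable def gbound (a x : ℝ) : ℝ :=
  (((x + 2) ^ a - x ^ a - (2 : ℝ) ^ a) / (2 * a) + Real.Gamma a) * Real.exp (-x)

/-- `g_a^lo(x) = x^a e^(-x) (x-a-1) / ((x-a)^2 + a)`. -/
noncomputable def gLo (a x : ℝ) : ℝ :=
  x ^ a * Real.exp (-x) * (x - a - 1) / ((x - a) ^ 2 + a)

/-- `g_a^hi(x) = x^a e^(-x) / (x-a)`. -/
noncomputable def gHi (a x : ℝ) : ℝ := x ^ a * Real.exp (-x) / (x - a)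

/-!
The recurrence `Γ(a,x) = x^(a-1) e^(-x) + (a-1) Γ(a-1,x)` reduces the comparison of `G_{a;1}` with
`Γ(a,·)` to that of `G_c` with `Γ(c,·)` for `c = a - 1 ∈ (0,2)`. The constant `b = b_c` is chosen so
that both agree at `0`, and both tend to `0` at `∞`; hence the sign of their difference is known
once its derivative changes sign exactly once. That derivative has the sign of a difference `u - v`
of products of powers, and `log (u / v)` again vanishes at `∞` and has a derivative with the sign of
a linear function, so one principle about functions vanishing at `∞` applies twice. The signs that
matter come from `max 1 c ≤ b ≤ 2`, which is log-convexity of `Γ`.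

The asymptotics at `∞` hold because `Γ(a,x) ~ x^(a-1) e^(-x)` while `G_{a-1}(x)` is of smaller
order; at `0` both `G_{a;1}` and `Γ(a,·)` tend to `Γ(a)`.
-/

open MeasureTheory Asymptotics
open scoped Topology

section SingleCrossing

lemma lt_of_strictMonoOn_Ici_of_tendsto_atTop {α β : Type*} [LinearOrder α] [NoMaxOrder α]
    [Preorder β] [TopologicalSpace β] [OrderClosedTopology β] {f : α → β} {x : α} {l : β}
    (hf : StrictMonoOn f (Ici x)) (hl : Tendsto f atTop (𝓝 l)) : f x < l := by
  have : Nonempty α := ⟨x⟩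
  obtain ⟨y, hxy⟩ := exists_gt x
  refine (hf self_mem_Ici hxy.le hxy).trans_le (ge_of_tendsto hl ?_)
  filter_upwards [eventually_ge_atTop y] with z hyz
  exact hf.monotoneOn hxy.le (hxy.le.trans hyz) hyz

/-- The strict single crossing property on a set `s` of reals: once `g` is nonnegative at a point of
`s`, it is positive at all later points of `s`. -/
def StrictSingleCrossingOn (g : ℝ → ℝ) (s : Set ℝ) : Prop :=
  ∀ ⦃x⦄, x ∈ s → ∀ ⦃y⦄, y ∈ s → x < y → 0 ≤ g x → 0 < g y

namespace StrictSingleCrossingOn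

variable {f f' g : ℝ → ℝ} {s : Set ℝ}

lemma congr_sign (hf : StrictSingleCrossingOn f s)
    (h : ∀ x ∈ s, SignType.sign (f x) = SignType.sign (g x)) : StrictSingleCrossingOn g s := by
  intro x hx y hy hxy hgx
  rw [← sign_nonneg_iff, ← h x hx, sign_nonneg_iff] at hgx
  rw [← sign_eq_one_iff, ← h y hy, sign_eq_one_iff]
  exact hf hx hy hxy hgx

-- Where `f` is nonnegative it cannot increase all the way to its limit `0`, so `f'` is still
-- negative there and hence everywhere before.
lemma neg_of_hasDerivAt (hf' : StrictSingleCrossingOn f' (interior s)) (hs : IsUpperSet s)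
    (hcont : ContinuousOn f s) (hderiv : ∀ x ∈ interior s, HasDerivAt f (f' x) x)
    (hlim : Tendsto f atTop (𝓝 0)) : StrictSingleCrossingOn (-f) s := by
  intro x hx y _ hxy hfx
  have hIci : Ici x ⊆ s := hs.Ici_subset hx
  have hIoi : Ioi x ⊆ interior s := interior_Ici (a := x) ▸ interior_mono hIci
  by_contra! hfy
  have hf'y : f' y < 0 := by
    by_contra! hf'y
    have hmono : StrictMonoOn f (Ici y) := by
      refine strictMonoOn_of_hasDerivWithinAt_pos (f' := f') (convex_Ici y)
        (hcont.mono ((Ici_subset_Ici.2 hxy.le).trans hIci)) ?_ ?_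
      all_goals
        intro z hz
        rw [interior_Ici] at hz
      · exact (hderiv z (hIoi (hxy.trans hz))).hasDerivWithinAt
      · exact hf' (hIoi hxy) (hIoi (hxy.trans hz)) hz hf'y
    simp only [Pi.neg_apply] at hfy
    linarith [lt_of_strictMonoOn_Ici_of_tendsto_atTop hmono hlim]
  have hanti : StrictAntiOn f (Icc x y) := by
    refine strictAntiOn_of_hasDerivWithinAt_neg (f' := f') (convex_Icc x y)
      (hcont.mono (Icc_subset_Ici_self.trans hIci)) ?_ ?_
    all_goals
      intro z hz
      rw [interior_Icc] at hz
    · exact (hderiv z (hIoi hz.1)).hasDerivWithinAt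
    · by_contra! hf'z
      exact hf'y.not_gt (hf' (hIoi hz.1) (hIoi hxy) hz.2 hf'z)
  have := hanti (left_mem_Icc.2 hxy.le) (right_mem_Icc.2 hxy.le) hxy
  simp only [Pi.neg_apply] at hfx hfy
  linarith

end StrictSingleCrossingOn

end SingleCrossing

section IncGamma

lemma hasDerivAt_integral_Ioi {E : Type*} [NormedAddCommGroup E] [NormedSpace ℝ E]
    [CompleteSpace E] {f : ℝ → E} {x₀ x : ℝ} (hf : IntegrableOn f (Ioi x₀)) (hx : x₀ < x)
    (hfx : ContinuousAt f x) : HasDerivAt (fun y => ∫ t in Ioi y, f t) (-f x) x := by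
  have hint : IntervalIntegrable f volume x₀ x :=
    (intervalIntegrable_iff_integrableOn_Ioc_of_le hx.le).2 (hf.mono_set Ioc_subset_Ioi_self)
  have hmeas : StronglyMeasurableAtFilter f (𝓝 x) :=
    ⟨Ioi x₀, Ioi_mem_nhds hx, hf.aestronglyMeasurable⟩
  refine ((intervalIntegral.integral_hasDerivAt_right hint hmeas hfx).const_sub
    (∫ t in Ioi x₀, f t)).congr_of_eventuallyEq ?_
  filter_upwards [Ioi_mem_nhds hx] with y hy
  rw [← intervalIntegral.integral_Ioi_sub_Ioi hf (le_of_lt hy), sub_sub_cancel]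

variable {a x : ℝ}

lemma continuousAt_rpow_mul_exp_neg (a : ℝ) (hx : x ≠ 0) :
    ContinuousAt (fun t : ℝ => t ^ a * exp (-t)) x :=
  (continuousAt_rpow_const x a (Or.inl hx)).mul (by fun_prop)

lemma integrableOn_rpow_mul_exp_neg_Ioi (a : ℝ) (hx : 0 < x) :
    IntegrableOn (fun t : ℝ => t ^ a * exp (-t)) (Ioi x) := by
  refine integrable_of_isBigO_exp_neg one_half_pos (fun t ht =>
    (continuousAt_rpow_mul_exp_neg a (hx.trans_le ht).ne').continuousWithinAt) ?_
  simpa only [mul_comm] using (Gamma_integrand_isLittleO a).isBigO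

lemma tendsto_rpow_mul_exp_neg_atTop (a : ℝ) :
    Tendsto (fun x : ℝ => x ^ a * exp (-x)) atTop (𝓝 0) := by
  simpa using tendsto_rpow_mul_exp_neg_mul_atTop_nhds_zero a 1 one_pos

lemma hasDerivAt_incGamma (a : ℝ) (hx : 0 < x) :
    HasDerivAt (incGamma a) (-(x ^ (a - 1) * exp (-x))) x :=
  hasDerivAt_integral_Ioi (integrableOn_rpow_mul_exp_neg_Ioi (a - 1) (half_pos hx))
    (half_lt_self hx) (continuousAt_rpow_mul_exp_neg (a - 1) hx.ne')

lemma continuousOn_incGamma (ha : 0 < a) : ContinuousOn (incGamma a) (Ici 0) := by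
  refine IntegrableOn.continuousOn_Ici_primitive_Ioi ?_
  simpa only [mul_comm] using GammaIntegral_convergent ha

lemma tendsto_incGamma_atTop (a : ℝ) : Tendsto (incGamma a) atTop (𝓝 0) :=
  tendsto_integral_Ioi_zero tendsto_id

lemma incGamma_zero (ha : 0 < a) : incGamma a 0 = Gamma a := by
  simp only [incGamma, Gamma_eq_integral ha, mul_comm]

lemma incGamma_one (x : ℝ) : incGamma 1 x = exp (-x) := by
  simp only [incGamma, sub_self, rpow_zero, one_mul, integral_exp_neg_Ioi]

lemma incGamma_nonneg (a : ℝ) (hx : 0 < x) : 0 ≤ incGamma a x :=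
  setIntegral_nonneg measurableSet_Ioi fun t ht => by
    have : 0 < t := hx.trans ht
    positivity

lemma incGamma_eq_add (a : ℝ) (hx : 0 < x) :
    incGamma a x = x ^ (a - 1) * exp (-x) + (a - 1) * incGamma (a - 1) x := by
  have hderiv : ∀ t ∈ Ici x, HasDerivAt (fun t : ℝ => -(t ^ (a - 1) * exp (-t)))
      (t ^ (a - 1) * exp (-t) - (a - 1) * (t ^ (a - 1 - 1) * exp (-t))) t := fun t ht => by
    have hrpow := hasDerivAt_rpow_const (x := t) (p := a - 1) (Or.inl (hx.trans_le ht).ne')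
    exact (hrpow.mul (hasDerivAt_neg t).exp).neg.congr_deriv (by ring)
  have hint := integrableOn_rpow_mul_exp_neg_Ioi (a - 1) hx
  have hint' := (integrableOn_rpow_mul_exp_neg_Ioi (a - 1 - 1) hx).const_mul (a - 1)
  have hparts := integral_Ioi_of_hasDerivAt_of_tendsto' hderiv (hint.sub hint')
    (tendsto_rpow_mul_exp_neg_atTop (a - 1)).neg
  rw [integral_sub hint hint', integral_const_mul] at hparts
  simp only [incGamma]
  linarith

lemma incGamma_sub_one_le (a : ℝ) (hx : 0 < x) : incGamma (a - 1) x ≤ x⁻¹ * incGamma a x := by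
  rw [incGamma, incGamma, ← integral_const_mul]
  refine setIntegral_mono_on (integrableOn_rpow_mul_exp_neg_Ioi _ hx)
    ((integrableOn_rpow_mul_exp_neg_Ioi _ hx).const_mul _) measurableSet_Ioi fun t ht => ?_
  have ht₀ : 0 < t := hx.trans ht
  calc t ^ (a - 1 - 1) * exp (-t) = t⁻¹ * (t ^ (a - 1) * exp (-t)) := by
        rw [rpow_sub_one ht₀.ne']
        ring
    _ ≤ x⁻¹ * (t ^ (a - 1) * exp (-t)) := by
        gcongr
        exact le_of_lt ht

lemma isLittleO_incGamma_sub_one (a : ℝ) : incGamma (a - 1) =o[atTop] incGamma a := by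
  have hbound : incGamma (a - 1) =O[atTop] fun x => x⁻¹ * incGamma a x := by
    refine IsBigO.of_norm_eventuallyLE ?_
    filter_upwards [eventually_gt_atTop 0] with x hx
    rw [norm_of_nonneg (incGamma_nonneg _ hx)]
    exact incGamma_sub_one_le a hx
  have hinv : (fun x : ℝ => x⁻¹ * incGamma a x) =o[atTop] fun x => 1 * incGamma a x :=
    ((isLittleO_one_iff ℝ).2 tendsto_inv_atTop_zero).mul_isBigO (isBigO_refl _ _)
  simpa only [one_mul] using hbound.trans_isLittleO hinv

lemma isEquivalent_incGamma (a : ℝ) :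
    incGamma a ~[atTop] fun x => x ^ (a - 1) * exp (-x) := by
  refine IsEquivalent.symm ?_
  refine ((isLittleO_incGamma_sub_one a).const_mul_left (-(a - 1))).congr' ?_ .rfl
  filter_upwards [eventually_gt_atTop 0] with x hx
  rw [Pi.sub_apply, incGamma_eq_add a hx]
  ring

end IncGamma


section BCoef

variable {a : ℝ}

lemma Gamma_add_one_le_one (ha₀ : 0 < a) (ha₁ : a < 1) : Gamma (a + 1) ≤ 1 := by
  have h := Gamma_mul_add_mul_le_rpow_Gamma_mul_rpow_Gamma one_pos two_pos (sub_pos.2 ha₁) ha₀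
    (sub_add_cancel 1 a)
  rw [Gamma_one, Gamma_two, one_rpow, one_rpow, one_mul] at h
  convert h using 2
  ring

lemma Gamma_add_one_le_two_rpow (ha₁ : 1 < a) (ha₂ : a < 2) : Gamma (a + 1) ≤ 2 ^ (a - 1) := by
  have h := Gamma_mul_add_mul_le_rpow_Gamma_mul_rpow_Gamma two_pos three_pos (sub_pos.2 ha₂)
    (sub_pos.2 ha₁) (by ring)
  rw [Gamma_two, one_rpow, one_mul, show Gamma 3 = 2 by simp] at h
  convert h using 2
  ring

-- Log-convexity at `2`, written as a convex combination of `a + 1` and `3`.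
lemma two_rpow_le_Gamma_add_one (ha₀ : 0 < a) (ha₁ : a < 1) : 2 ^ (a - 1) ≤ Gamma (a + 1) := by
  have hΓ : 0 < Gamma (a + 1) := Gamma_pos_of_pos (by linarith)
  have ha₂ : 0 < 2 - a := by linarith
  have h := Gamma_mul_add_mul_le_rpow_Gamma_mul_rpow_Gamma (s := a + 1) (a := 1 / (2 - a))
    (b := (1 - a) / (2 - a)) (by linarith) three_pos (by positivity)
    (div_pos (by linarith) ha₂) (by field_simp; ring)
  rw [show 1 / (2 - a) * (a + 1) + (1 - a) / (2 - a) * 3 = 2 by field_simp; ring, Gamma_two,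
    show Gamma 3 = 2 by simp, div_eq_mul_one_div (1 - a), rpow_mul two_pos.le,
    ← mul_rpow hΓ.le (by positivity)] at h
  have h' : 1 ≤ Gamma (a + 1) * 2 ^ (1 - a) := by
    by_contra! hlt
    exact h.not_gt (rpow_lt_one (by positivity) hlt (by positivity))
  rwa [← neg_sub 1 a, rpow_neg two_pos.le, inv_le_iff_one_le_mul₀ (by positivity)]

-- Log-convexity at `2`, written as a convex combination of `a` and `a + 1`.
lemma rpow_sub_one_le_Gamma_add_one (ha₁ : 1 < a) (ha₂ : a < 2) :
    a ^ (a - 1) ≤ Gamma (a + 1) := by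
  have ha₀ : 0 < a := by linarith
  have hΓ : 0 < Gamma (a + 1) := Gamma_pos_of_pos (by linarith)
  have hΓa : Gamma a = Gamma (a + 1) / a := by rw [Gamma_add_one ha₀.ne']; field_simp
  have h := Gamma_mul_add_mul_le_rpow_Gamma_mul_rpow_Gamma (s := a) (t := a + 1) ha₀
    (by linarith) (sub_pos.2 ha₁) (sub_pos.2 ha₂) (by ring)
  rw [show (a - 1) * a + (2 - a) * (a + 1) = 2 by ring, Gamma_two, hΓa,
    div_rpow hΓ.le ha₀.le, div_mul_eq_mul_div, ← rpow_add hΓ,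
    show a - 1 + (2 - a) = 1 by ring, rpow_one, one_le_div (by positivity)] at h
  exact h

lemma bCoef_pos (ha : -1 < a) : 0 < bCoef a := by
  unfold bCoef
  split_ifs
  · exact exp_pos _
  · exact rpow_pos_of_pos (Gamma_pos_of_pos (by linarith)) _

lemma bCoef_rpow_sub_one (ha : -1 < a) : bCoef a ^ (a - 1) = Gamma (a + 1) := by
  by_cases ha₁ : a = 1
  · norm_num [ha₁]
  · rw [bCoef, if_neg ha₁, one_div,
      rpow_inv_rpow (Gamma_pos_of_pos (by linarith)).le (sub_ne_zero.2 ha₁)]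

lemma bCoef_le_two (ha₀ : 0 < a) (ha₂ : a < 2) (ha₁ : a ≠ 1) : bCoef a ≤ 2 := by
  have hb := bCoef_pos (by linarith : -1 < a)
  have hpow := bCoef_rpow_sub_one (by linarith : -1 < a)
  rcases ha₁.lt_or_gt with h | h
  · rw [← rpow_le_rpow_iff_of_neg two_pos hb (sub_neg.2 h), hpow]
    exact two_rpow_le_Gamma_add_one ha₀ h
  · rw [← rpow_le_rpow_iff hb.le two_pos.le (sub_pos.2 h), hpow]
    exact Gamma_add_one_le_two_rpow h ha₂

lemma max_one_le_bCoef (ha₀ : 0 < a) (ha₂ : a < 2) (ha₁ : a ≠ 1) : max 1 a ≤ bCoef a := by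
  have hb := bCoef_pos (by linarith : -1 < a)
  have hpow := bCoef_rpow_sub_one (by linarith : -1 < a)
  rcases ha₁.lt_or_gt with h | h
  · rw [max_eq_left h.le, ← rpow_le_rpow_iff_of_neg hb one_pos (sub_neg.2 h), hpow, one_rpow]
    exact Gamma_add_one_le_one ha₀ h
  · rw [max_eq_right h.le, ← rpow_le_rpow_iff ha₀.le hb.le (sub_pos.2 h), hpow]
    exact rpow_sub_one_le_Gamma_add_one h ha₂

end BCoef

section LogRatio

/-- `log (v / u) / (c - 1)` for the two terms `u = x ^ (c - 1) * (x + (b - 1) * c)` and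
`v = (x + b) ^ (c - 1) * (x + (b - c))` whose difference `u - v` governs the sign of the derivative
of `Gbound c - incGamma c`, where `b = bCoef c`. -/
noncomputable def logRatio (c b x : ℝ) : ℝ :=
  log (x + b) - log x + (log (x + (b - c)) - log (x + (b - 1) * c)) / (c - 1)

variable {b c x : ℝ}

lemma tendsto_logRatio_atTop (c b : ℝ) : Tendsto (logRatio c b) atTop (𝓝 0) := by
  have h := fun y : ℝ => tendsto_log_comp_add_sub_log y
  have hsum := (h b).add (((h (b - c)).sub (h ((b - 1) * c))).div_const (c - 1))
  simp only [sub_sub_sub_cancel_right, sub_zero, zero_div, add_zero] at hsum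
  exact hsum

lemma hasDerivAt_logRatio (hc : c ≠ 1) (hx : 0 < x) (hb : 0 < x + b) (hbc : 0 < x + (b - c))
    (hbc' : 0 < x + (b - 1) * c) :
    HasDerivAt (logRatio c b) (b * c * (x * (2 - b) - (b - 1) * (b - c)) /
      (x * (x + b) * (x + (b - c)) * (x + (b - 1) * c))) x := by
  have hlog : ∀ d : ℝ, 0 < x + d → HasDerivAt (fun x => log (x + d)) (1 / (x + d)) x :=
    fun d hd => ((hasDerivAt_id x).add_const d).log hd.ne'
  have hsub := sub_ne_zero.2 hc
  refine (((hlog b hb).sub (hasDerivAt_log hx.ne')).add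
    (((hlog _ hbc).sub (hlog _ hbc')).div_const (c - 1))).congr_deriv ?_
  generalize hp : x + (b - 1) * c = p at hbc' ⊢
  field_simp
  rw [← hp]
  ring

lemma sign_log_sub_log {u v : ℝ} (hu : 0 < u) (hv : 0 < v) :
    SignType.sign (log u - log v) = SignType.sign (u - v) := by
  rcases lt_trichotomy u v with h | rfl | h
  · rw [sign_neg (sub_neg.2 h), sign_neg (sub_neg.2 (log_lt_log hu h))]
  · simp only [sub_self]
  · rw [sign_pos (sub_pos.2 h), sign_pos (sub_pos.2 (log_lt_log hv h))]

lemma sign_neg_logRatio (hc : c ≠ 1) (hx : 0 < x) (hb : 0 < x + b) (hbc : 0 < x + (b - c))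
    (hbc' : 0 < x + (b - 1) * c) :
    SignType.sign (-logRatio c b x) = SignType.sign
      ((x ^ (c - 1) * (x + (b - 1) * c) - (x + b) ^ (c - 1) * (x + (b - c))) / (c - 1)) := by
  have hlog : -logRatio c b x = (log (x ^ (c - 1) * (x + (b - 1) * c)) -
      log ((x + b) ^ (c - 1) * (x + (b - c)))) * (c - 1)⁻¹ := by
    have hsub := sub_ne_zero.2 hc
    rw [log_mul (by positivity) hbc'.ne', log_mul (by positivity) hbc.ne', log_rpow hx,
      log_rpow hb, logRatio]
    field_simp
    ring
  rw [hlog, div_eq_mul_inv, sign_mul, sign_mul, sign_log_sub_log (by positivity) (by positivity)]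

lemma strictSingleCrossingOn_mul_sub {m k : ℝ} (hm : 0 ≤ m) (hk : m = 0 → 0 < k) (s : Set ℝ) :
    StrictSingleCrossingOn (fun x => x * m - k) s := by
  intro x _ y _ hxy hx
  rcases hm.eq_or_lt with rfl | hm
  · linarith [hk rfl]
  · linarith [mul_lt_mul_of_pos_right hxy hm]

lemma strictSingleCrossingOn_neg_logRatio (hc₀ : 0 < c) (hc₁ : c ≠ 1) (hc₂ : c < 2)
    (hb₁ : max 1 c ≤ b) (hb₂ : b ≤ 2) : StrictSingleCrossingOn (-logRatio c b) (Ioi 0) := by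
  obtain ⟨hb, hcb⟩ := max_le_iff.1 hb₁
  have hpos : ∀ x : ℝ, 0 < x → 0 < x + b ∧ 0 < x + (b - c) ∧ 0 < x + (b - 1) * c :=
    fun x hx => ⟨by linarith, by linarith,
      add_pos_of_pos_of_nonneg hx (mul_nonneg (sub_nonneg.2 hb) hc₀.le)⟩
  have hderiv : ∀ x ∈ Ioi (0 : ℝ), HasDerivAt (logRatio c b) _ x := fun x hx =>
    have ⟨h, h', h''⟩ := hpos x hx
    hasDerivAt_logRatio hc₁ hx h h' h''
  refine StrictSingleCrossingOn.neg_of_hasDerivAt ?_ (isUpperSet_Ioi 0)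
    (fun x hx => (hderiv x hx).continuousAt.continuousWithinAt) (by rwa [interior_Ioi])
    (tendsto_logRatio_atTop c b)
  rw [interior_Ioi]
  refine (strictSingleCrossingOn_mul_sub (sub_nonneg.2 hb₂) (k := (b - 1) * (b - c))
    (fun hb₂' => ?_) (Ioi 0)).congr_sign fun x hx => ?_
  · rw [← sub_eq_zero.1 hb₂']
    linarith
  · have hx₀ : 0 < x := hx
    have hb₀ : 0 < b := one_pos.trans_le hb
    obtain ⟨h, h', h''⟩ := hpos x hx
    have hscale : 0 < b * c / (x * (x + b) * (x + (b - c)) * (x + (b - 1) * c)) :=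
      div_pos (mul_pos hb₀ hc₀) (mul_pos (mul_pos (mul_pos hx₀ h) h') h'')
    rw [mul_div_right_comm, sign_mul, sign_pos hscale, one_mul]

end LogRatio

section Gbound

variable {a x : ℝ}

lemma Gbound_zero (ha : 0 < a) : Gbound a 0 = Gamma a := by
  have hb := bCoef_pos (by linarith : -1 < a)
  have hpow : bCoef a ^ a = a * Gamma a * bCoef a := by
    rw [← Gamma_add_one ha.ne', ← bCoef_rpow_sub_one (by linarith), ← rpow_add_one hb.ne',
      sub_add_cancel]
  rw [Gbound, zero_add, zero_rpow ha.ne', hpow, neg_zero, exp_zero]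
  field_simp
  ring

lemma Gbound_one (x : ℝ) : Gbound 1 x = exp (-x) := by
  have hb := bCoef_pos (by norm_num : (-1 : ℝ) < 1)
  simp only [Gbound, rpow_one, one_mul, add_sub_cancel_left]
  field_simp

lemma continuous_Gbound (ha : 0 < a) : Continuous (Gbound a) := by
  have hrpow : ∀ d : ℝ, Continuous fun x : ℝ => (x + d) ^ a := fun d =>
    (continuous_add_const d).rpow_const fun _ => Or.inr ha.le
  exact (((hrpow _).sub (by simpa using hrpow 0)).mul (by fun_prop)).div_const _

lemma isLittleO_Gbound (a : ℝ) : Gbound a =o[atTop] fun x => x ^ a * exp (-x) := by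
  set b := bCoef a with hb
  have hlim : Tendsto (fun x : ℝ => 1 + b / x) atTop (𝓝 1) := by
    simpa using (tendsto_const_nhds.div_atTop tendsto_id : Tendsto (b / ·) atTop (𝓝 0)).const_add 1
  refine isLittleO_iff_exists_eq_mul.2 ⟨fun x => ((1 + b / x) ^ a - 1) / (a * b), ?_, ?_⟩
  · simpa using ((hlim.rpow_const (p := a) (Or.inl one_ne_zero)).sub_const 1).div_const (a * b)
  · filter_upwards [eventually_gt_atTop 0, eventually_gt_atTop (-b)] with x hx hxb
    have hxa : x ^ a ≠ 0 := (rpow_pos_of_pos hx a).ne'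
    rw [Gbound, Pi.mul_apply, ← hb, one_add_div hx.ne', div_rpow (by linarith) hx.le]
    field_simp

lemma tendsto_Gbound_atTop (a : ℝ) : Tendsto (Gbound a) atTop (𝓝 0) :=
  (isLittleO_Gbound a).isBigO.trans_tendsto (tendsto_rpow_mul_exp_neg_atTop a)

lemma hasDerivAt_Gbound_sub_incGamma (ha : -1 < a) (ha₀ : a ≠ 0) (hx : 0 < x) :
    HasDerivAt (fun x => Gbound a x - incGamma a x)
      ((x ^ (a - 1) * (x + (bCoef a - 1) * a) -
        (x + bCoef a) ^ (a - 1) * (x + (bCoef a - a))) * (exp (-x) / (a * bCoef a))) x := by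
  have hb := bCoef_pos ha
  set b := bCoef a
  have hxb : 0 < x + b := by linarith
  have hrpow := hasDerivAt_rpow_const (x := x) (p := a) (Or.inl hx.ne')
  have hrpow' := ((hasDerivAt_id x).add_const b).rpow_const (p := a) (Or.inl hxb.ne')
  refine ((((hrpow'.sub hrpow).mul (hasDerivAt_neg x).exp).div_const (a * b)).sub
    (hasDerivAt_incGamma a hx)).congr_deriv ?_
  simp only [Pi.sub_apply, id]
  rw [rpow_sub_one hx.ne', rpow_sub_one hxb.ne']
  field_simp
  ring

lemma Gbound_sub_incGamma_div_neg (ha₀ : 0 < a) (ha₁ : a ≠ 1) (ha₂ : a < 2) (hx : 0 < x) :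
    (Gbound a x - incGamma a x) / (a - 1) < 0 := by
  have hb := bCoef_pos (by linarith : -1 < a)
  have hb₁ := max_one_le_bCoef ha₀ ha₂ ha₁
  obtain ⟨hb₁', hab⟩ := max_le_iff.1 hb₁
  have hderiv := fun x (hx : 0 < x) =>
    (hasDerivAt_Gbound_sub_incGamma (by linarith) ha₀.ne' hx).div_const (a - 1)
  have hcross :
      StrictSingleCrossingOn (-fun x => (Gbound a x - incGamma a x) / (a - 1)) (Ici 0) := by
    refine StrictSingleCrossingOn.neg_of_hasDerivAt ?_ (isUpperSet_Ici 0)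
      (((continuous_Gbound ha₀).continuousOn.sub (continuousOn_incGamma ha₀)).div_const _)
      (by rwa [interior_Ici])
      (by simpa using ((tendsto_Gbound_atTop a).sub (tendsto_incGamma_atTop a)).div_const (a - 1))
    rw [interior_Ici]
    refine (strictSingleCrossingOn_neg_logRatio ha₀ ha₁ ha₂ hb₁
      (bCoef_le_two ha₀ ha₂ ha₁)).congr_sign fun x hx => ?_
    have hx₀ : 0 < x := hx
    have hx₁ : 0 < x + (bCoef a - 1) * a :=
      add_pos_of_pos_of_nonneg hx₀ (mul_nonneg (sub_nonneg.2 hb₁') ha₀.le)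
    have hscale : 0 < exp (-x) / (a * bCoef a) := by positivity
    rw [Pi.neg_apply, sign_neg_logRatio ha₁ hx₀ (by linarith) (by linarith) hx₁,
      mul_div_right_comm, sign_mul, sign_pos hscale, mul_one]
  have hzero : 0 ≤ -((Gbound a 0 - incGamma a 0) / (a - 1)) := by
    rw [Gbound_zero ha₀, incGamma_zero ha₀, sub_self, zero_div, neg_zero]
  exact neg_pos.1 (hcross self_mem_Ici hx.le hx hzero)

lemma incGamma_lt_Gbound (ha₀ : 0 < a) (ha₁ : a < 1) (hx : 0 < x) :
    incGamma a x < Gbound a x := by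
  have h := Gbound_sub_incGamma_div_neg ha₀ ha₁.ne (by linarith) hx
  rwa [div_lt_iff_of_neg (sub_neg.2 ha₁), zero_mul, sub_pos] at h

lemma Gbound_lt_incGamma (ha₁ : 1 < a) (ha₂ : a < 2) (hx : 0 < x) :
    Gbound a x < incGamma a x := by
  have h := Gbound_sub_incGamma_div_neg (by linarith) ha₁.ne' ha₂ hx
  rwa [div_lt_iff₀ (sub_pos.2 ha₁), zero_mul, sub_neg] at h

end Gbound

section GboundRec

/-- The paper's `G_{a;1}`: one step of the recurrence `incGamma_eq_add` with `Gbound (a - 1)` in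
place of `incGamma (a - 1)`. -/
noncomputable def GboundRec (a x : ℝ) : ℝ :=
  x ^ (a - 1) * exp (-x) + (a - 1) * Gbound (a - 1) x

variable {a x : ℝ}

lemma GboundRec_sub_incGamma (a : ℝ) (hx : 0 < x) :
    GboundRec a x - incGamma a x = (a - 1) * (Gbound (a - 1) x - incGamma (a - 1) x) := by
  rw [GboundRec, incGamma_eq_add a hx]
  ring

lemma incGamma_lt_GboundRec (ha₁ : 1 < a) (ha₂ : a < 2) (hx : 0 < x) :
    incGamma a x < GboundRec a x := by
  rw [← sub_pos, GboundRec_sub_incGamma a hx]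
  exact mul_pos (by linarith) (sub_pos.2 (incGamma_lt_Gbound (by linarith) (by linarith) hx))

lemma GboundRec_two (hx : 0 < x) : GboundRec 2 x = incGamma 2 x := by
  rw [← sub_eq_zero, GboundRec_sub_incGamma 2 hx, show (2 : ℝ) - 1 = 1 by norm_num, Gbound_one,
    incGamma_one, sub_self, mul_zero]

lemma GboundRec_lt_incGamma (ha₂ : 2 < a) (ha₃ : a < 3) (hx : 0 < x) :
    GboundRec a x < incGamma a x := by
  rw [← sub_neg, GboundRec_sub_incGamma a hx]
  exact mul_neg_of_pos_of_neg (by linarith)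
    (sub_neg.2 (Gbound_lt_incGamma (by linarith) (by linarith) hx))

lemma GboundRec_zero (ha : 1 < a) : GboundRec a 0 = Gamma a := by
  have ha' : 0 < a - 1 := sub_pos.2 ha
  rw [GboundRec, zero_rpow ha'.ne', Gbound_zero ha', ← Gamma_add_one ha'.ne', sub_add_cancel,
    zero_mul, zero_add]

lemma continuous_GboundRec (ha : 1 < a) : Continuous (GboundRec a) :=
  ((continuous_id.rpow_const fun _ => Or.inr (sub_pos.2 ha).le).mul (by fun_prop)).add
    ((continuous_Gbound (sub_pos.2 ha)).const_mul _)

lemma tendsto_GboundRec_div_incGamma_nhdsGT_zero (ha : 1 < a) :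
    Tendsto (fun x => GboundRec a x / incGamma a x) (𝓝[>] 0) (𝓝 1) := by
  have ha₀ : 0 < a := one_pos.trans ha
  have hΓ := (Gamma_pos_of_pos ha₀).ne'
  have hnum : Tendsto (GboundRec a) (𝓝[>] 0) (𝓝 (Gamma a)) :=
    GboundRec_zero ha ▸ (continuous_GboundRec ha).continuousWithinAt
  have hden : Tendsto (incGamma a) (𝓝[>] 0) (𝓝 (Gamma a)) :=
    incGamma_zero ha₀ ▸ (continuousOn_incGamma ha₀ 0 self_mem_Ici).mono Ioi_subset_Ici_self
  exact div_self hΓ ▸ hnum.div hden hΓ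

lemma isEquivalent_GboundRec (a : ℝ) :
    GboundRec a ~[atTop] fun x => x ^ (a - 1) * exp (-x) :=
  IsEquivalent.refl.add_isLittleO ((isLittleO_Gbound (a - 1)).const_mul_left (a - 1))

lemma tendsto_GboundRec_div_incGamma_atTop (a : ℝ) :
    Tendsto (fun x => GboundRec a x / incGamma a x) atTop (𝓝 1) := by
  have hne : ∀ᶠ x in atTop, incGamma a x ≠ 0 := by
    filter_upwards [(isEquivalent_incGamma a).symm.isBigO.eq_zero_imp, eventually_gt_atTop 0]
      with x himp hx h
    have : 0 < x ^ (a - 1) * exp (-x) := by positivity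
    exact this.ne' (himp h)
  exact (isEquivalent_iff_tendsto_one hne).1
    ((isEquivalent_GboundRec a).trans (isEquivalent_incGamma a).symm)

end GboundRec

theorem stmt16 (a : ℝ) (ha1 : 1 < a) (ha3 : a < 3) :
    (∀ x : ℝ, 0 < x →
      ((1 < a ∧ a < 2) →
        incGamma a x < x ^ (a - 1) * Real.exp (-x) + (a - 1) * Gbound (a - 1) x) ∧
      (a = 2 →
        incGamma a x = x ^ (a - 1) * Real.exp (-x) + (a - 1) * Gbound (a - 1) x) ∧
      ((2 < a ∧ a < 3) →
        x ^ (a - 1) * Real.exp (-x) + (a - 1) * Gbound (a - 1) x < incGamma a x)) ∧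
    Filter.Tendsto
      (fun x : ℝ => (x ^ (a - 1) * Real.exp (-x) + (a - 1) * Gbound (a - 1) x) / incGamma a x)
      (nhdsWithin 0 (Set.Ioi 0)) (nhds 1) ∧
    Filter.Tendsto
      (fun x : ℝ => (x ^ (a - 1) * Real.exp (-x) + (a - 1) * Gbound (a - 1) x) / incGamma a x)
      Filter.atTop (nhds 1) := by
  refine ⟨fun x hx => ⟨fun h => incGamma_lt_GboundRec h.1 h.2 hx, ?_,
    fun h => GboundRec_lt_incGamma h.1 h.2 hx⟩, tendsto_GboundRec_div_incGamma_nhdsGT_zero ha1,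
    tendsto_GboundRec_div_incGamma_atTop a⟩
  rintro rfl
  exact (GboundRec_two hx).symm
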